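/- Let n ≥ 2 and let m = 2m₀+1 be odd with m₀ ≥ 1. Let H be a Hankel tensor of order m and dimension n with parameter vector h ∈ ℂ^{d+1}, d = (n−1)m, let s = ⌊d/2⌋, and let r = rank C_{d−s,s}(h). Suppose r ≤ 1 + (n−1)m₀, the kernel of C_{d−r,r}(h) is nonzero, and every nonzero f = (f_0,…,f_r) ∈ ker C_{d−r,r}(h) has binary form f(x,y) = f_0 x^r + ⋯ + f_r y^r that is NOT squarefree as a homogeneous polynomial in ℂ[x,y]. Then rank_V(H) = d−r+2, brank_V(H) = brank_S(H) = brank(H) = r, and r ≤ rank_S(H) ≤ d−r+2. -/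

import Mathlib

open scoped BigOperators
open MvPolynomial

noncomputable section

/-- An order-`m`, dimension-`n` complex tensor. -/
abbrev Tensor (m n : ℕ) := (Fin m → Fin n) → ℂ

/-- Tensors expressible as a sum of `r` rank-one tensors. -/
def cpSet (m n r : ℕ) : Set (Tensor m n) :=
  {T | ∃ u : Fin r → Fin m → Fin n → ℂ, ∀ i, T i = ∑ k, ∏ j, u k j (i j)}

/-- Tensors expressible as a sum of `r` symmetric rank-one tensors. -/
def symSet (m n r : ℕ) : Set (Tensor m n) :=
  {T | ∃ v : Fin r → Fin n → ℂ, ∀ i, T i = ∑ k, ∏ j, v k (i j)}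

/-- The Vandermonde vector `v(a,b) ∈ ℂ^n`, `v(a,b)_i = a^(n-1-i) * b^i`. -/
def vand (n : ℕ) (a b : ℂ) : Fin n → ℂ := fun i => a ^ (n - 1 - (i : ℕ)) * b ^ (i : ℕ)

/-- Tensors expressible as a sum of `r` Vandermonde rank-one tensors. -/
def vandSet (m n r : ℕ) : Set (Tensor m n) :=
  {T | ∃ ab : Fin r → ℂ × ℂ, ∀ i, T i = ∑ k, ∏ j, vand n (ab k).1 (ab k).2 (i j)}

/-- The cp rank of a tensor. -/
def cpRank {m n : ℕ} (T : Tensor m n) : ℕ := sInf {r | T ∈ cpSet m n r}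

/-- The symmetric rank of a tensor. -/
def symRank {m n : ℕ} (T : Tensor m n) : ℕ := sInf {r | T ∈ symSet m n r}

/-- The Vandermonde rank of a tensor. -/
def vandRank {m n : ℕ} (T : Tensor m n) : ℕ := sInf {r | T ∈ vandSet m n r}

/-- The border rank of a tensor (closure in the product topology). -/
def brank {m n : ℕ} (T : Tensor m n) : ℕ := sInf {r | T ∈ closure (cpSet m n r)}

/-- The symmetric border rank of a tensor. -/
def bSymRank {m n : ℕ} (T : Tensor m n) : ℕ := sInf {r | T ∈ closure (symSet m n r)}

/-- The border Vandermonde rank of a tensor. -/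
def bVandRank {m n : ℕ} (T : Tensor m n) : ℕ := sInf {r | T ∈ closure (vandSet m n r)}

/-- `T` is the Hankel tensor with parameter vector `h ∈ ℂ^{(n-1)m+1}`. -/
def IsHankel {m n : ℕ} (T : Tensor m n) (h : Fin ((n - 1) * m + 1) → ℂ) : Prop :=
  ∀ i : Fin m → Fin n, T i = h ⟨∑ j, (i j : ℕ), by
    have h1 : ∑ j, (i j : ℕ) ≤ ∑ _j : Fin m, (n - 1) :=
      Finset.sum_le_sum fun j _ => Nat.le_pred_of_lt (i j).isLt
    simp only [Finset.sum_const, Finset.card_univ, Fintype.card_fin, smul_eq_mul] at h1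
    exact Nat.lt_succ_of_le (h1.trans (le_of_eq (Nat.mul_comm m (n - 1))))⟩

/-- The `(d-r+1) × (r+1)` Hankel (catalecticant) matrix `C_{d-r,r}(h)` of `h ∈ ℂ^{d+1}`. -/
def hMat (d r : ℕ) (h : Fin (d + 1) → ℂ) : Matrix (Fin (d - r + 1)) (Fin (r + 1)) ℂ :=
  Matrix.of fun i j => if hij : (i : ℕ) + (j : ℕ) < d + 1 then h ⟨(i : ℕ) + (j : ℕ), hij⟩ else 0

/-- The binary form `f(x,y) = f_0 x^r + f_1 x^(r-1) y + ⋯ + f_r y^r`. -/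
def binForm (r : ℕ) (f : Fin (r + 1) → ℂ) : MvPolynomial (Fin 2) ℂ :=
  ∑ j : Fin (r + 1), C (f j) * X 0 ^ (r - (j : ℕ)) * X 1 ^ (j : ℕ)

/-- The binary form `h(x,y) = ∑_j binom(d,j) h_j x^j y^(d-j)` associated with `h ∈ ℂ^{d+1}`. -/
def assocForm (d : ℕ) (h : Fin (d + 1) → ℂ) : MvPolynomial (Fin 2) ℂ :=
  ∑ j : Fin (d + 1), C ((d.choose (j : ℕ) : ℂ) * h j) * X 0 ^ (j : ℕ) * X 1 ^ (d - (j : ℕ))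

/-- Parameter vectors of binary forms of Waring rank at most `r`. -/
def waringSet (d r : ℕ) : Set (Fin (d + 1) → ℂ) :=
  {h | ∃ ab : Fin r → ℂ × ℂ,
    assocForm d h = ∑ i, (C (ab i).1 * X 0 + C (ab i).2 * X 1) ^ d}

/-- The Waring rank of the binary form associated with `h`. -/
def waringRank (d : ℕ) (h : Fin (d + 1) → ℂ) : ℕ := sInf {r | h ∈ waringSet d r}

/-- The border Waring rank of the binary form associated with `h`. -/
def bWaringRank (d : ℕ) (h : Fin (d + 1) → ℂ) : ℕ := sInf {r | h ∈ closure (waringSet d r)}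

/-!
Decompositions of the Hankel tensor `H` into Vandermonde terms correspond to squarefree binary forms
apolar to the functional `x^j ↦ h_j` on polynomials of degree at most `d`. Let `f` be a nonzero form
in the kernel of `C_{d-r,r}(h)`. A greatest common divisor argument shows that every apolar form of
degree at most `d - r + 1` is a multiple of `f`, hence not squarefree, while in degree `d - r + 2` a
dimension count gives an apolar form coprime to `f`, and the general member of the pencil that it
spans with a multiple of `f` is squarefree. This gives the Vandermonde rank. For the border ranks,
deforming `f` to squarefree forms of degree `r`, and the functional along with it, shows that `r`
terms suffice in the limit; conversely the matrix flattening `H` along `m / 2` of its `m` indices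
has a Hankel submatrix of rank `r`, and matrix rank is lower semicontinuous.
-/

open scoped Polynomial
open Module (finrank)

section CoprimeForms

variable {K : Type*} [Field K] {a b r k N : ℕ} {f q F G : K[X]}

/-- Binary forms of degrees `a` and `b` without a common zero on the projective line. Throughout,
a binary form of degree `k` is encoded by its dehomogenization, a polynomial of degree at most `k`;
it vanishes at infinity exactly when its coefficient of `X ^ k` does. -/
structure IsCoprimeForms (a b : ℕ) (F G : K[X]) : Prop where
  natDegree_left_le : F.natDegree ≤ a
  natDegree_right_le : G.natDegree ≤ b
  isCoprime : IsCoprime F G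
  coeff_ne_zero : F.coeff a ≠ 0 ∨ G.coeff b ≠ 0

lemma mem_degreeLT_add_one : f ∈ Polynomial.degreeLT K (k + 1) ↔ f.natDegree ≤ k := by
  rw [Polynomial.degreeLT_succ_eq_degreeLE, Polynomial.mem_degreeLE,
    Polynomial.natDegree_le_iff_degree_le]

/-- The forms of degree `k` divisible by the form `f` of degree `r`. Only the zero form qualifies
when `k < r`. -/
def formMultiples (r k : ℕ) (f : K[X]) : Submodule K K[X] :=
  (Polynomial.degreeLT K (k + 1 - r)).map (LinearMap.mulLeft K f)

lemma mem_formMultiples :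
    q ∈ formMultiples r k f ↔ ∃ g : K[X], (g ≠ 0 → g.natDegree + r ≤ k) ∧ f * g = q := by
  refine exists_congr fun g => and_congr_left fun _ => ?_
  rw [SetLike.mem_coe, Polynomial.mem_degreeLT]
  by_cases hg : g = 0
  · simp [hg]
  · rw [Polynomial.degree_eq_natDegree hg, Nat.cast_lt, imp_iff_right hg]
    omega

lemma finrank_formMultiples (hf : f ≠ 0) : finrank K (formMultiples r k f) = k + 1 - r := by
  have hinj : Function.Injective (LinearMap.mulLeft K f) := mul_right_injective₀ hf
  rw [formMultiples, ← (Submodule.equivMapOfInjective _ hinj _).finrank_eq,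
    (Polynomial.degreeLTEquiv K _).finrank_eq, Module.finrank_fin_fun]

instance : FiniteDimensional K (formMultiples r k f) := by
  unfold formMultiples
  infer_instance

namespace IsCoprimeForms

lemma symm (h : IsCoprimeForms a b F G) : IsCoprimeForms b a G F :=
  ⟨h.natDegree_right_le, h.natDegree_left_le, h.isCoprime.symm, h.coeff_ne_zero.symm⟩

lemma C_mul (h : IsCoprimeForms a b F G) {u : K} (hu : u ≠ 0) :
    IsCoprimeForms a b (Polynomial.C u * F) (Polynomial.C u * G) where
  natDegree_left_le := (Polynomial.natDegree_C_mul_le u F).trans h.natDegree_left_le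
  natDegree_right_le := (Polynomial.natDegree_C_mul_le u G).trans h.natDegree_right_le
  isCoprime := (isCoprime_mul_unit_left (Polynomial.isUnit_C.2 hu.isUnit) F G).2 h.isCoprime
  coeff_ne_zero := by simpa [hu] using h.coeff_ne_zero

lemma degreeLT_le_sup_of_coeff_ne_zero (h : IsCoprimeForms a b F G) (hF : F.coeff a ≠ 0)
    (hN : a + b ≤ N + 1) :
    Polynomial.degreeLT K (N + 1) ≤ formMultiples a N F ⊔ formMultiples b N G := by
  intro T hT
  have hFa : F.natDegree = a :=
    h.natDegree_left_le.antisymm (Polynomial.le_natDegree_of_ne_zero hF)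
  have hF0 : F ≠ 0 := by rintro rfl; simp at hF
  obtain ⟨u, v, huv⟩ := h.isCoprime
  set q := T * v % F
  set p := T * u + T * v / F * G
  have hT_eq : F * p + G * q = T := by
    have hdiv : F * (T * v / F) + q = T * v := EuclideanDomain.div_add_mod _ _
    linear_combination T * huv + G * hdiv
  have hq : q ≠ 0 → q.natDegree < a := fun hq0 =>
    hFa ▸ Polynomial.natDegree_lt_natDegree hq0 (Polynomial.degree_mod_lt _ hF0)
  have hGq : G * q ∈ formMultiples b N G :=
    mem_formMultiples.2 ⟨q, fun hq0 => by have := hq hq0; omega, rfl⟩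
  refine Submodule.mem_sup.2 ⟨F * p, mem_formMultiples.2 ⟨p, fun hp0 => ?_, rfl⟩, _, hGq, hT_eq⟩
  have hFp : (F * p).natDegree ≤ N := by
    rw [eq_sub_of_add_eq hT_eq]
    refine (Polynomial.natDegree_sub_le _ _).trans (max_le ?_ ?_)
    · exact mem_degreeLT_add_one.1 hT
    · by_cases hq0 : q = 0
      · simp [hq0]
      · have := hq hq0
        have := h.natDegree_right_le
        have := Polynomial.natDegree_mul_le (p := G) (q := q)
        omega
  rwa [Polynomial.natDegree_mul hF0 hp0, hFa, add_comm] at hFp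

lemma degreeLT_le_sup (h : IsCoprimeForms a b F G) (hN : a + b ≤ N + 1) :
    Polynomial.degreeLT K (N + 1) ≤ formMultiples a N F ⊔ formMultiples b N G :=
  h.coeff_ne_zero.elim (fun hF => h.degreeLT_le_sup_of_coeff_ne_zero hF hN) fun hG =>
    (h.symm.degreeLT_le_sup_of_coeff_ne_zero hG (by omega)).trans (sup_comm _ _).le

/-- Multiplying by a power of a linear form that does not vanish where `G` does raises the degree
without creating common zeros. -/
lemma exists_mul_left [Infinite K] (h : IsCoprimeForms a b F G) (hG : G ≠ 0) (l : ℕ) :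
    ∃ g : K[X], g.natDegree = l ∧ IsCoprimeForms (a + l) b (F * g) G := by
  obtain ⟨w, hw⟩ : ∃ w, G.eval w ≠ 0 := by
    by_contra! hzero
    exact hG (Polynomial.funext fun w => by simpa using hzero w)
  have hmonic : ((Polynomial.X - Polynomial.C w) ^ l).Monic := (Polynomial.monic_X_sub_C w).pow l
  have hdeg : ((Polynomial.X - Polynomial.C w) ^ l).natDegree = l := by simp
  refine ⟨(Polynomial.X - Polynomial.C w) ^ l, hdeg,
    Polynomial.natDegree_mul_le_of_le h.natDegree_left_le hdeg.le, h.natDegree_right_le,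
    h.isCoprime.mul_left (IsCoprime.pow_left ?_), ?_⟩
  · exact (Polynomial.irreducible_X_sub_C w).coprime_iff_not_dvd.2 fun hdvd =>
      hw (Polynomial.dvd_iff_isRoot.1 hdvd)
  · rw [Polynomial.coeff_mul_add_eq_of_natDegree_le h.natDegree_left_le hdeg.le]
    have hlead : ((Polynomial.X - Polynomial.C w) ^ l).coeff l = 1 := by
      simpa only [hdeg] using hmonic.coeff_natDegree
    rw [hlead, mul_one]
    exact h.coeff_ne_zero

end IsCoprimeForms

lemma isCoprimeForms_one (hf : f.natDegree ≤ r) : IsCoprimeForms 0 r 1 f :=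
  ⟨by simp, hf, isCoprime_one_left, by simp⟩

/-- `e`, as a form of degree `c`, is the greatest common divisor, zeros at infinity included. -/
lemma exists_eq_mul_isCoprimeForms (hf : f ≠ 0) (hq : q ≠ 0) (hfr : f.natDegree ≤ r)
    (hqk : q.natDegree ≤ k) :
    ∃ (c a b : ℕ) (e F G : K[X]), c + a = r ∧ c + b = k ∧ e ≠ 0 ∧ e.natDegree ≤ c ∧
      e * F = f ∧ e * G = q ∧ IsCoprimeForms a b F G := by
  classical
  obtain ⟨F, G, hF, hG, hunit⟩ := extract_gcd f q
  generalize gcd f q = e at *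
  subst hF
  subst hG
  obtain ⟨he, hF⟩ := mul_ne_zero_iff.1 hf
  obtain ⟨-, hG⟩ := mul_ne_zero_iff.1 hq
  rw [Polynomial.natDegree_mul he hF] at hfr
  rw [Polynomial.natDegree_mul he hG] at hqk
  have hcoprime : IsCoprime F G := (gcd_isUnit_iff F G).1 hunit
  have hF' := Polynomial.leadingCoeff_ne_zero.2 hF
  have hG' := Polynomial.leadingCoeff_ne_zero.2 hG
  rcases le_total (r - F.natDegree) (k - G.natDegree) with hle | hle
  · exact ⟨r - F.natDegree, F.natDegree, k - (r - F.natDegree), e, F, G, by omega, by omega, he,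
      by omega, rfl, rfl, le_rfl, by omega, hcoprime, .inl hF'⟩
  · exact ⟨k - G.natDegree, r - (k - G.natDegree), G.natDegree, e, F, G, by omega, by omega, he,
      by omega, rfl, rfl, by omega, le_rfl, hcoprime, .inr hG'⟩

end CoprimeForms

section Apolarity

variable {K : Type*} [Field K] {L : K[X] →ₗ[K] K} {a b c d j k r : ℕ} {e f g q F G : K[X]}

/-- The forms of degree `k` apolar to a functional `L` on forms of degree `d`: those `f` such that
`L` vanishes on all multiples of `f` of degree `d`. -/
def apolar (L : K[X] →ₗ[K] K) (d k : ℕ) : Submodule K K[X] where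
  carrier := {f | f.natDegree ≤ k ∧ ∀ p : K[X], p.natDegree + k ≤ d → L (f * p) = 0}
  add_mem' := by
    rintro f g ⟨hf, hLf⟩ ⟨hg, hLg⟩
    refine ⟨Polynomial.natDegree_add_le_of_degree_le hf hg, fun p hp => ?_⟩
    rw [add_mul, map_add, hLf p hp, hLg p hp, add_zero]
  zero_mem' := by simp
  smul_mem' := by
    rintro u f ⟨hf, hLf⟩
    refine ⟨(Polynomial.natDegree_smul_le u f).trans hf, fun p hp => ?_⟩
    rw [smul_mul_assoc, map_smul, hLf p hp, smul_zero]

lemma mem_apolar_iff_X_pow :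
    f ∈ apolar L d k ↔
      f.natDegree ≤ k ∧ ∀ i : ℕ, i + k ≤ d → L (f * Polynomial.X ^ i) = 0 := by
  refine and_congr_right fun _ => ⟨fun hf i hi => hf _ (by simpa using hi), fun hf p hp => ?_⟩
  rw [Polynomial.as_sum_range_C_mul_X_pow p, Finset.mul_sum, map_sum]
  refine Finset.sum_eq_zero fun i hi => ?_
  rw [Finset.mem_range] at hi
  rw [mul_left_comm, ← Polynomial.smul_eq_C_mul, map_smul, hf i (by omega), smul_zero]

lemma map_mul_eq_zero_of_mem_apolar (hf : f ∈ apolar L d k)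
    (hg : g ≠ 0 → g.natDegree + k ≤ d) : L (f * g) = 0 := by
  by_cases hg0 : g = 0
  · simp [hg0]
  · exact hf.2 g (hg hg0)

lemma mul_mem_apolar (hf : f ∈ apolar L d k) (hg : g.natDegree + k ≤ r) :
    f * g ∈ apolar L d r := by
  refine ⟨(Polynomial.natDegree_mul_le_of_le hf.1 le_rfl).trans (by omega), fun p hp => ?_⟩
  rw [mul_assoc]
  have := Polynomial.natDegree_mul_le (p := g) (q := p)
  exact hf.2 _ (by omega)

lemma formMultiples_le_apolar (hf : f ∈ apolar L d r) : formMultiples r k f ≤ apolar L d k := by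
  intro q hq
  obtain ⟨g, hg, rfl⟩ := mem_formMultiples.1 hq
  by_cases hg0 : g = 0
  · simp [hg0]
  · exact mul_mem_apolar hf (hg hg0)

lemma mem_apolar_of_mul_mem (hFG : IsCoprimeForms a b F G) (he : e.natDegree ≤ c)
    (hF : e * F ∈ apolar L d (c + a)) (hG : e * G ∈ apolar L d (c + b))
    (hd : c + a + b ≤ d + 1) : e ∈ apolar L d c := by
  refine ⟨he, fun p hp => ?_⟩
  have hp_mem : p ∈ Polynomial.degreeLT K (d - c + 1) := mem_degreeLT_add_one.2 (by omega)
  obtain ⟨_, hFu, _, hGv, rfl⟩ := Submodule.mem_sup.1 (hFG.degreeLT_le_sup (by omega) hp_mem)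
  obtain ⟨u, hu, rfl⟩ := mem_formMultiples.1 hFu
  obtain ⟨v, hv, rfl⟩ := mem_formMultiples.1 hGv
  have hLu : L (e * F * u) = 0 :=
    map_mul_eq_zero_of_mem_apolar hF fun hu0 => by have := hu hu0; omega
  have hLv : L (e * G * v) = 0 :=
    map_mul_eq_zero_of_mem_apolar hG fun hv0 => by have := hv hv0; omega
  rw [mul_add, map_add, ← mul_assoc, ← mul_assoc, hLu, hLv, add_zero]

/-- `f` is a nonzero apolar form of least degree, and this degree is `r`. -/
structure IsMinimalApolar (L : K[X] →ₗ[K] K) (d r : ℕ) (f : K[X]) : Prop where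
  mem : f ∈ apolar L d r
  ne_zero : f ≠ 0
  eq_bot_of_lt : ∀ j < r, apolar L d j = ⊥

namespace IsMinimalApolar

/-- The greatest common divisor of `f` and `q` is apolar as soon as the degree count allows it, so
by minimality it is then `f` itself. -/
lemma mem_formMultiples_or_isCoprimeForms (hf : IsMinimalApolar L d r f) (hq : q ∈ apolar L d k)
    (hrk : r + k ≤ d + 2) :
    q ∈ formMultiples r k f ∨ r + k = d + 2 ∧ IsCoprimeForms r k f q := by
  by_cases hq0 : q = 0
  · exact .inl (hq0 ▸ zero_mem _)
  obtain ⟨c, a, b, e, F, G, rfl, rfl, he0, hec, rfl, rfl, hFG⟩ :=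
    exists_eq_mul_isCoprimeForms hf.ne_zero hq0 hf.mem.1 hq.1
  by_cases hd : c + a + b ≤ d + 1
  · have he := mem_apolar_of_mul_mem hFG hec hf.mem hq hd
    have ha : a = 0 := by
      by_contra ha
      rw [hf.eq_bot_of_lt c (by omega)] at he
      exact he0 he
    subst ha
    obtain ⟨u, hu⟩ := Polynomial.natDegree_eq_zero.1 (Nat.le_zero.1 hFG.natDegree_left_le)
    have hu0 : u ≠ 0 := by rintro rfl; exact hf.ne_zero (by simp [← hu])
    refine .inl (mem_formMultiples.2 ⟨Polynomial.C u⁻¹ * G, fun _ => ?_, ?_⟩)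
    · have := Polynomial.natDegree_C_mul_le u⁻¹ G
      have := hFG.natDegree_right_le
      omega
    · rw [← hu, mul_assoc, ← mul_assoc (Polynomial.C u), ← Polynomial.C_mul,
        mul_inv_cancel₀ hu0, Polynomial.C_1, one_mul]
  · obtain rfl : c = 0 := by omega
    obtain ⟨u, rfl⟩ := Polynomial.natDegree_eq_zero.1 (Nat.le_zero.1 hec)
    have hu : u ≠ 0 := by rintro rfl; simp at he0
    simpa using Or.inr ⟨by omega, hFG.C_mul hu⟩

lemma apolar_eq_formMultiples (hf : IsMinimalApolar L d r f) (hrk : r + k ≤ d + 1) :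
    apolar L d k = formMultiples r k f :=
  le_antisymm (fun _ hq => (hf.mem_formMultiples_or_isCoprimeForms hq (by omega)).resolve_right
    fun h => by omega) (formMultiples_le_apolar hf.mem)

end IsMinimalApolar

end Apolarity

section SquarefreeForms

variable {K : Type*} [Field K] {k r : ℕ} {f q B G P : K[X]} {s : Finset K}

/-- Squarefreeness of a binary form of degree `k`, read off its dehomogenization: the last condition
says that the form vanishes at most simply at infinity. -/
structure IsSquarefreeForm (k : ℕ) (P : K[X]) : Prop where
  natDegree_le : P.natDegree ≤ k
  squarefree : Squarefree P
  le_natDegree_add_one : k ≤ P.natDegree + 1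

lemma isSquarefreeForm_of_le_one (hf : f ≠ 0) (hfr : f.natDegree ≤ r) (hr : r ≤ 1) :
    IsSquarefreeForm r f := by
  refine ⟨hfr, ?_, by omega⟩
  rcases Nat.le_one_iff_eq_zero_or_eq_one.1 (hfr.trans hr) with h | h
  · exact (Polynomial.isUnit_iff_degree_eq_zero.2
      ((Polynomial.degree_eq_iff_natDegree_eq hf).2 h)).squarefree
  · exact (Polynomial.irreducible_of_degree_eq_one
      ((Polynomial.degree_eq_iff_natDegree_eq hf).2 h)).squarefree

lemma IsSquarefreeForm.of_mem_formMultiples (hq : IsSquarefreeForm k q) (hfr : f.natDegree ≤ r)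
    (hmem : q ∈ formMultiples r k f) : IsSquarefreeForm r f := by
  obtain ⟨g, hg, rfl⟩ := mem_formMultiples.1 hmem
  obtain ⟨hf0, hg0⟩ := mul_ne_zero_iff.1 hq.squarefree.ne_zero
  have hdeg := hq.le_natDegree_add_one
  rw [Polynomial.natDegree_mul hf0 hg0] at hdeg
  exact ⟨hfr, hq.squarefree.squarefree_of_dvd (dvd_mul_right f g), by have := hg hg0; omega⟩

lemma squarefree_nodal_id : Squarefree (Lagrange.nodal s (id : K → K)) := by
  rw [Lagrange.nodal_eq]
  exact Finset.squarefree_prod_of_pairwise_isCoprime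
    (fun x _ y _ hxy =>
      (Polynomial.pairwise_coprime_X_sub_C Function.injective_id hxy).isRelPrime)
    fun z _ => (Polynomial.irreducible_X_sub_C z).squarefree

section AlgClosed

variable [IsAlgClosed K]

lemma exists_eq_C_mul_nodal_id (hP : Squarefree P) :
    ∃ u ≠ 0, ∃ s : Finset K, s.card = P.natDegree ∧
      P = Polynomial.C u * Lagrange.nodal s (id : K → K) := by
  classical
  have hroots : P.roots.Nodup :=
    Polynomial.nodup_roots (PerfectField.separable_iff_squarefree.2 hP)
  refine ⟨P.leadingCoeff, Polynomial.leadingCoeff_ne_zero.2 hP.ne_zero, P.roots.toFinset, ?_, ?_⟩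
  · rw [Multiset.toFinset_card_of_nodup hroots, IsAlgClosed.card_roots_eq_natDegree]
  · conv_lhs => rw [(IsAlgClosed.splits P).eq_prod_roots]
    simp only [Lagrange.nodal_eq, Finset.prod, Multiset.toFinset_val, hroots.dedup, id]

lemma exists_eval_add_smul_eq_zero_of_not_squarefree {t : K} (h : ¬ Squarefree (G + t • B)) :
    ∃ z, G.eval z + t * B.eval z = 0 ∧
      G.derivative.eval z + t * B.derivative.eval z = 0 := by
  rw [← PerfectField.separable_iff_squarefree, Polynomial.Separable,
    Polynomial.isCoprime_iff_aeval_ne_zero_of_isAlgClosed K K] at h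
  push Not at h
  simpa using h

/-- At a multiple root of `G + t • B` the Wronskian of `G` and `B` vanishes, and such a root
determines `t`. -/
lemma IsCoprimeForms.finite_setOf_not_squarefree [CharZero K] (h : IsCoprimeForms k k G B)
    (hk : 0 < k) : {t : K | ¬ Squarefree (G + t • B)}.Finite := by
  classical
  have hW : Polynomial.wronskian G B ≠ 0 := by
    rw [Ne, h.isCoprime.wronskian_eq_zero_iff, Polynomial.derivative_eq_zero,
      Polynomial.derivative_eq_zero]
    rintro ⟨hG, hB⟩
    rcases h.coeff_ne_zero with hne | hne
    · exact hne (Polynomial.coeff_eq_zero_of_natDegree_lt (by omega))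
    · exact hne (Polynomial.coeff_eq_zero_of_natDegree_lt (by omega))
  refine (((Polynomial.wronskian G B).roots.toFinset.image
    fun z => -(G.eval z) / B.eval z).finite_toSet).subset fun t ht => ?_
  obtain ⟨z, hz, hz'⟩ := exists_eval_add_smul_eq_zero_of_not_squarefree ht
  have hBz : B.eval z ≠ 0 := by
    intro hBz
    obtain ⟨u, v, huv⟩ := h.isCoprime
    have hGz : G.eval z = 0 := by simpa [hBz] using hz
    simpa [hGz, hBz] using congrArg (Polynomial.eval z) huv
  rw [Finset.mem_coe, Finset.mem_image]
  refine ⟨z, ?_, by field_simp; linear_combination -hz⟩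
  rw [Multiset.mem_toFinset, Polynomial.mem_roots hW, Polynomial.IsRoot, Polynomial.wronskian,
    Polynomial.eval_sub, Polynomial.eval_mul, Polynomial.eval_mul]
  linear_combination B.derivative.eval z * hz - B.eval z * hz'

end AlgClosed

lemma IsCoprimeForms.finite_setOf_natDegree_ne (h : IsCoprimeForms k k G B) :
    {t : K | (G + t • B).natDegree ≠ k}.Finite := by
  refine (Set.finite_singleton (-(G.coeff k) / B.coeff k)).subset fun t ht => ?_
  have hcoeff : G.coeff k + t * B.coeff k = 0 := by
    by_contra hne
    refine ht (le_antisymm ?_ (Polynomial.le_natDegree_of_ne_zero (by simpa using hne)))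
    exact Polynomial.natDegree_add_le_of_degree_le h.natDegree_left_le
      ((Polynomial.natDegree_smul_le t B).trans h.natDegree_right_le)
  have hB : B.coeff k ≠ 0 := fun hB =>
    h.coeff_ne_zero.elim (fun hG => hG (by simpa [hB] using hcoeff)) fun hB' => hB' hB
  rw [Set.mem_singleton_iff]
  field_simp
  linear_combination hcoeff

/-- Bertini's theorem for a pencil of binary forms without base points. -/
lemma IsCoprimeForms.finite_setOf_not_squarefree_natDegree [IsAlgClosed K] [CharZero K]
    (h : IsCoprimeForms k k G B) (hk : 0 < k) :
    {t : K | ¬ (Squarefree (G + t • B) ∧ (G + t • B).natDegree = k)}.Finite := by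
  simp only [not_and_or, Set.ofPred_or]
  exact (h.finite_setOf_not_squarefree hk).union h.finite_setOf_natDegree_ne

end SquarefreeForms

section ApolarSquarefree

variable {K : Type*} [Field K] {L : K[X] →ₗ[K] K} {d k r : ℕ} {f g P p : K[X]} {s : Finset K}

lemma exists_squarefree_mem_apolar_of_isCoprimeForms [IsAlgClosed K] [CharZero K]
    (hfg : IsCoprimeForms r k f g) (hf : f ∈ apolar L d r) (hg : g ∈ apolar L d k) (hg0 : g ≠ 0)
    (hrk : r ≤ k) (hk : 0 < k) : ∃ P ∈ apolar L d k, Squarefree P ∧ P.natDegree = k := by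
  obtain ⟨u, hu, hfu⟩ := hfg.exists_mul_left hg0 (k - r)
  rw [Nat.add_sub_cancel' hrk] at hfu
  obtain ⟨t, ht⟩ := (hfu.symm.finite_setOf_not_squarefree_natDegree hk).exists_notMem
  rw [Set.mem_ofPred_eq, not_not] at ht
  exact ⟨g + t • (f * u), add_mem hg (Submodule.smul_mem _ t (mul_mem_apolar hf (by omega))), ht⟩

lemma apply_eq_sum_of_nodal_mem_apolar [DecidableEq K]
    (hs : Lagrange.nodal s (id : K → K) ∈ apolar L d s.card) (hp : p.natDegree ≤ d) :
    L p = ∑ z ∈ s, L (Lagrange.basis s id z) * p.eval z := by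
  have hmonic : (Lagrange.nodal s (id : K → K)).Monic := Lagrange.nodal_monic
  have hquot : L (Lagrange.nodal s id * (p /ₘ Lagrange.nodal s id)) = 0 := by
    refine map_mul_eq_zero_of_mem_apolar hs fun hne => ?_
    have hle := (Polynomial.divByMonic_eq_zero_iff hmonic).not.1 hne
    have hcard : s.card ≤ p.natDegree := by
      simpa only [Lagrange.natDegree_nodal] using Polynomial.natDegree_le_natDegree (not_lt.1 hle)
    rw [Polynomial.natDegree_divByMonic p hmonic, Lagrange.natDegree_nodal]
    omega
  have hrem : p %ₘ Lagrange.nodal s id = Lagrange.interpolate s id fun z => p.eval z := by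
    refine Lagrange.eq_interpolate_of_eval_eq _ Function.injective_id.injOn ?_ fun z hz => ?_
    · rw [← Lagrange.degree_nodal (v := (id : K → K))]
      exact Polynomial.degree_modByMonic_lt p hmonic
    · have hroot : (Lagrange.nodal s id).eval z = 0 :=
        Lagrange.eval_nodal_at_node (v := (id : K → K)) hz
      conv_rhs => rw [← Polynomial.modByMonic_add_div p (Lagrange.nodal s id)]
      simp [hroot]
  conv_lhs => rw [← Polynomial.modByMonic_add_div p (Lagrange.nodal s id)]
  rw [map_add, hquot, add_zero, hrem, Lagrange.interpolate_apply, map_sum]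
  refine Finset.sum_congr rfl fun z _ => ?_
  rw [← Polynomial.smul_eq_C_mul, map_smul, smul_eq_mul, mul_comm]

lemma exists_eq_sum_eval_of_mem_apolar [IsAlgClosed K] (hP : P ∈ apolar L d k)
    (hsq : Squarefree P) (hPk : P.natDegree = k) :
    ∃ w z : Fin k → K, ∀ p : K[X], p.natDegree ≤ d → L p = ∑ i, w i * p.eval (z i) := by
  classical
  obtain ⟨u, hu, s, hs, rfl⟩ := exists_eq_C_mul_nodal_id hsq
  rw [← Polynomial.smul_eq_C_mul, Submodule.smul_mem_iff _ hu, ← hPk, ← hs] at hP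
  let e := s.equivFinOfCardEq (hs.trans hPk)
  refine ⟨fun i => L (Lagrange.basis s id (e.symm i : K)), fun i => e.symm i, fun p hp => ?_⟩
  rw [apply_eq_sum_of_nodal_mem_apolar hP hp,
    ← Finset.sum_coe_sort s fun z => L (Lagrange.basis s id z) * p.eval z]
  exact (Equiv.sum_comp e.symm
    fun z : s => L (Lagrange.basis s id (z : K)) * p.eval (z : K)).symm

end ApolarSquarefree

section LinearForms

variable {K : Type*} [Field K] {r : ℕ} {f : K[X]}

lemma homogenize_X_sub_C (z : K) :
    (Polynomial.X - Polynomial.C z).homogenize 1 = X 0 - C z * X 1 := by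
  simp [Polynomial.homogenize_sub]

lemma irreducible_X_sub_C_mul_X (z : K) :
    Irreducible (X 0 - C z * X 1 : MvPolynomial (Fin 2) K) := by
  have hcoeff : coeff (Finsupp.single 0 1) (X 0 - C z * X 1 : MvPolynomial (Fin 2) K) = 1 := by
    rw [coeff_sub, coeff_C_mul, coeff_X, coeff_X]
    simp [Finsupp.single_left_inj]
  refine irreducible_of_totalDegree_eq_one (IsHomogeneous.totalDegree ?_ ?_) fun x hx => ?_
  · rw [← homogenize_X_sub_C]
    exact Polynomial.isHomogeneous_homogenize _
  · rintro hzero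
    simp [hzero] at hcoeff
  · exact isUnit_of_dvd_one (hcoeff ▸ hx (Finsupp.single 0 1))

lemma isRelPrime_X_sub_C_mul_X {z w : K} (hzw : z ≠ w) :
    IsRelPrime (X 0 - C z * X 1 : MvPolynomial (Fin 2) K) (X 0 - C w * X 1) := by
  refine (irreducible_X_sub_C_mul_X z).isRelPrime_iff_not_dvd.2 fun hdvd => hzw ?_
  simpa [sub_eq_zero] using map_dvd (eval ![z, 1]) hdvd

lemma isRelPrime_X_one_X_sub_C_mul_X (z : K) :
    IsRelPrime (X 1 : MvPolynomial (Fin 2) K) (X 0 - C z * X 1) := by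
  refine (X_prime (i := (1 : Fin 2))).irreducible.isRelPrime_iff_not_dvd.2 fun hdvd => ?_
  simpa using map_dvd (eval ![(1 : K), 0]) hdvd

lemma homogenize_nodal_id (s : Finset K) :
    (Lagrange.nodal s id).homogenize s.card = ∏ z ∈ s, (X 0 - C z * X 1) := by
  rw [Lagrange.nodal_eq, Finset.card_eq_sum_ones, Polynomial.homogenize_finsetProd]
  · exact Finset.prod_congr rfl fun z _ => homogenize_X_sub_C z
  · simp

lemma IsSquarefreeForm.squarefree_homogenize [IsAlgClosed K] (hf : IsSquarefreeForm r f) :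
    Squarefree (f.homogenize r) := by
  obtain ⟨u, hu, s, hs, hfs⟩ := exists_eq_C_mul_nodal_id hf.squarefree
  obtain ⟨i, rfl⟩ := Nat.exists_eq_add_of_le (hs.trans_le hf.natDegree_le)
  have hi : i ≤ 1 := by have := hf.le_natDegree_add_one; omega
  have hfactor : f.homogenize (s.card + i) = C u * (X 1 ^ i * ∏ z ∈ s, (X 0 - C z * X 1)) := by
    rw [hfs, Polynomial.homogenize_C_mul, ← homogenize_nodal_id,
      ← mul_one (Lagrange.nodal s id), Polynomial.homogenize_mul _ _ (by simp) (by simp)]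
    simp [mul_comm]
  have hpow : Squarefree (X 1 ^ i : MvPolynomial (Fin 2) K) := by
    interval_cases i
    · simp
    · simpa using (X_prime (i := (1 : Fin 2))).irreducible.squarefree
  have hprod : Squarefree (∏ z ∈ s, (X 0 - C z * X 1) : MvPolynomial (Fin 2) K) :=
    Finset.squarefree_prod_of_pairwise_isCoprime (fun z _ w _ hzw => isRelPrime_X_sub_C_mul_X hzw)
      fun z _ => (irreducible_X_sub_C_mul_X z).squarefree
  have hrel : IsRelPrime (X 1 ^ i : MvPolynomial (Fin 2) K) (∏ z ∈ s, (X 0 - C z * X 1)) :=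
    IsRelPrime.prod_right fun z _ => (isRelPrime_X_one_X_sub_C_mul_X z).pow_left
  rw [hfactor]
  exact ((associated_unit_mul_left _ _ (hu.isUnit.map C)).squarefree_iff).2
    (squarefree_mul_iff.2 ⟨hrel, hpow, hprod⟩)

end LinearForms

section Catalecticant

variable {d j k r : ℕ} {f : ℂ[X]}

/-- The polynomial `∑ j, f j * X ^ j`, which dehomogenizes the binary form with coefficient
vector `f`. -/
def coeffPoly (k : ℕ) : (Fin (k + 1) → ℂ) →ₗ[ℂ] ℂ[X] :=
  (Polynomial.degreeLT ℂ (k + 1)).subtype ∘ₗ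
    (Polynomial.degreeLTEquiv ℂ (k + 1)).symm.toLinearMap

lemma coeffPoly_apply (f : Fin (k + 1) → ℂ) :
    coeffPoly k f = ∑ j : Fin (k + 1), Polynomial.monomial (j : ℕ) (f j) := rfl

lemma coeffPoly_injective : Function.Injective (coeffPoly k) :=
  Subtype.val_injective.comp (Polynomial.degreeLTEquiv ℂ (k + 1)).symm.injective

lemma natDegree_coeffPoly_le (f : Fin (k + 1) → ℂ) : (coeffPoly k f).natDegree ≤ k :=
  mem_degreeLT_add_one.1 ((Polynomial.degreeLTEquiv ℂ (k + 1)).symm f).2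

lemma exists_coeffPoly_eq (hf : f.natDegree ≤ k) : ∃ φ, coeffPoly k φ = f :=
  ⟨Polynomial.degreeLTEquiv ℂ (k + 1) ⟨f, mem_degreeLT_add_one.2 hf⟩, by simp [coeffPoly]⟩

lemma renameEquiv_swap_binForm (f : Fin (r + 1) → ℂ) :
    renameEquiv ℂ (Equiv.swap 0 1) (binForm r f) = (coeffPoly r f).homogenize r := by
  rw [coeffPoly_apply, Polynomial.homogenize_finsetSum, binForm, map_sum]
  refine Finset.sum_congr rfl fun j _ => ?_
  rw [← Polynomial.C_mul_X_pow_eq_monomial, Polynomial.homogenize_C_mul,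
    Polynomial.homogenize_X_pow (by omega)]
  simp [mul_comm, mul_assoc]

lemma squarefree_binForm {f : Fin (r + 1) → ℂ} (hf : IsSquarefreeForm r (coeffPoly r f)) :
    Squarefree (binForm r f) := by
  intro y hy
  have hy' := map_dvd (renameEquiv ℂ (Equiv.swap (0 : Fin 2) 1)) hy
  rw [map_mul, renameEquiv_swap_binForm] at hy'
  exact (MulEquiv.isUnit_map _).1 (hf.squarefree_homogenize _ hy')

/-- The linear functional on polynomials with moments `h 0, …, h d` and all higher moments zero. -/
def paramFunctional (h : Fin (d + 1) → ℂ) : ℂ[X] →ₗ[ℂ] ℂ :=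
  ∑ l : Fin (d + 1), h l • Polynomial.lcoeff ℂ l

lemma paramFunctional_apply (h : Fin (d + 1) → ℂ) (p : ℂ[X]) :
    paramFunctional h p = ∑ l : Fin (d + 1), h l * p.coeff l := by
  simp [paramFunctional]

lemma paramFunctional_X_pow (h : Fin (d + 1) → ℂ) (l : Fin (d + 1)) :
    paramFunctional h (Polynomial.X ^ (l : ℕ)) = h l := by
  simp [paramFunctional_apply, Polynomial.coeff_X_pow, Fin.val_inj]

lemma hMat_apply (h : Fin (d + 1) → ℂ) (i : Fin (d - k + 1)) (j : Fin (k + 1)) (hk : k ≤ d) :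
    hMat d k h i j = h ⟨i + j, by omega⟩ :=
  dif_pos _

lemma paramFunctional_coeffPoly_mul_X_pow (h : Fin (d + 1) → ℂ) (hk : k ≤ d)
    (f : Fin (k + 1) → ℂ) (i : Fin (d - k + 1)) :
    paramFunctional h (coeffPoly k f * Polynomial.X ^ (i : ℕ)) = (hMat d k h).mulVec f i := by
  rw [coeffPoly_apply, Finset.sum_mul, map_sum, Matrix.mulVec, dotProduct]
  refine Finset.sum_congr rfl fun j _ => ?_
  rw [← Polynomial.C_mul_X_pow_eq_monomial, mul_assoc, ← pow_add, ← Polynomial.smul_eq_C_mul,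
    map_smul, smul_eq_mul, mul_comm, add_comm, hMat_apply h i j hk, ← paramFunctional_X_pow h]

lemma coeffPoly_mem_apolar_iff (h : Fin (d + 1) → ℂ) (hk : k ≤ d) (f : Fin (k + 1) → ℂ) :
    coeffPoly k f ∈ apolar (paramFunctional h) d k ↔ (hMat d k h).mulVec f = 0 := by
  rw [mem_apolar_iff_X_pow, and_iff_right (natDegree_coeffPoly_le f), funext_iff]
  simp only [← paramFunctional_coeffPoly_mul_X_pow h hk]
  exact ⟨fun hf i => hf i (by omega), fun hf i hi => hf ⟨i, by omega⟩⟩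

lemma map_coeffPoly_ker (h : Fin (d + 1) → ℂ) (hk : k ≤ d) :
    (LinearMap.ker (hMat d k h).mulVecLin).map (coeffPoly k) =
      apolar (paramFunctional h) d k := by
  ext p
  constructor
  · rintro ⟨f, hf, rfl⟩
    exact (coeffPoly_mem_apolar_iff h hk f).2 hf
  · intro hp
    obtain ⟨f, rfl⟩ := exists_coeffPoly_eq hp.1
    exact ⟨f, (coeffPoly_mem_apolar_iff h hk f).1 hp, rfl⟩

lemma finiteDimensional_apolar (h : Fin (d + 1) → ℂ) (hk : k ≤ d) :
    FiniteDimensional ℂ (apolar (paramFunctional h) d k) := by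
  rw [← map_coeffPoly_ker h hk]
  infer_instance

lemma rank_hMat_add_finrank_apolar (h : Fin (d + 1) → ℂ) (hk : k ≤ d) :
    (hMat d k h).rank + finrank ℂ (apolar (paramFunctional h) d k) = k + 1 := by
  rw [← map_coeffPoly_ker h hk,
    ← (Submodule.equivMapOfInjective _ coeffPoly_injective _).finrank_eq, Matrix.rank,
    LinearMap.finrank_range_add_finrank_ker, Module.finrank_fin_fun]

/-- A nonzero apolar form of degree `j` has enough multiples to bound the rank by `j`. -/
lemma apolar_eq_bot_of_lt_rank {s : ℕ} {h : Fin (d + 1) → ℂ} (hs : s ≤ d)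
    (hj : j < (hMat d s h).rank) : apolar (paramFunctional h) d j = ⊥ := by
  have := finiteDimensional_apolar h hs
  rw [Submodule.eq_bot_iff]
  intro e he
  by_contra he0
  have hdim := Submodule.finrank_mono (formMultiples_le_apolar (k := s) he)
  rw [finrank_formMultiples he0] at hdim
  have := rank_hMat_add_finrank_apolar h hs
  omega

lemma IsMinimalApolar.le_rank_hMat {h : Fin (d + 1) → ℂ}
    (hf : IsMinimalApolar (paramFunctional h) d r f) (hrk : r ≤ k + 1) (hkd : k ≤ d)
    (hrd : r + k ≤ d + 1) : r ≤ (hMat d k h).rank := by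
  have := rank_hMat_add_finrank_apolar h hkd
  rw [hf.apolar_eq_formMultiples hrd, finrank_formMultiples hf.ne_zero] at this
  omega

/-- In degree `d - r + 2` a dimension count yields an apolar form that is not a multiple of `f`. -/
lemma IsMinimalApolar.exists_squarefree_mem_apolar {h : Fin (d + 1) → ℂ}
    (hf : IsMinimalApolar (paramFunctional h) d r f) (hr : 2 ≤ r) (hrd : 2 * r ≤ d + 2) :
    ∃ P ∈ apolar (paramFunctional h) d (d - r + 2), Squarefree P ∧
      P.natDegree = d - r + 2 := by
  have hkd : d - r + 2 ≤ d := by omega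
  obtain ⟨g, hg, hgf⟩ : ∃ g ∈ apolar (paramFunctional h) d (d - r + 2),
      g ∉ formMultiples r (d - r + 2) f := by
    by_contra! hle
    have hdim := Submodule.finrank_mono hle
    rw [finrank_formMultiples hf.ne_zero] at hdim
    have hrank := rank_hMat_add_finrank_apolar h hkd
    have := (hMat d (d - r + 2) h).rank_le_height
    omega
  obtain ⟨-, hfg⟩ := (hf.mem_formMultiples_or_isCoprimeForms hg (by omega)).resolve_left hgf
  exact exists_squarefree_mem_apolar_of_isCoprimeForms hfg hf.mem hg
    (fun hg0 => hgf (hg0 ▸ zero_mem _)) (by omega) (by omega)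

end Catalecticant

open Topology

section KernelPerturbation

variable {𝕜 m n : Type*} [Field 𝕜] [TopologicalSpace 𝕜] [IsTopologicalDivisionRing 𝕜] [T1Space 𝕜]
  [Finite m] [Fintype n]

open Matrix in
/-- With a right inverse `B` of `A`, take `η M = v - B * (M * B)⁻¹ * M * v`. -/
lemma exists_continuousAt_mulVec_eq_zero {A : Matrix m n 𝕜} {v : n → 𝕜}
    (hA : Function.Surjective A.mulVec) (hv : A *ᵥ v = 0) :
    ∃ η : Matrix m n 𝕜 → n → 𝕜, ContinuousAt η A ∧ η A = v ∧ ∀ᶠ M in 𝓝 A, M *ᵥ η M = 0 := by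
  classical
  have := Fintype.ofFinite m
  obtain ⟨B, hB⟩ := Matrix.mulVec_surjective_iff_exists_right_inverse.1 hA
  have hdet : (A * B).det ≠ 0 := by simp [hB]
  have hmul : Continuous fun M : Matrix m n 𝕜 => M * B := continuous_id.matrix_mul continuous_const
  have hinv : ContinuousAt (fun M : Matrix m n 𝕜 => (M * B)⁻¹) A := by
    refine ContinuousAt.comp (g := Inv.inv) (continuousAt_matrix_inv _ ?_) hmul.continuousAt
    rw [Ring.inverse_eq_inv']
    exact continuousAt_inv₀ hdet
  have hcont : Continuous fun x : Matrix m m 𝕜 × (m → 𝕜) => B *ᵥ (x.1 *ᵥ x.2) :=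
    continuous_const.matrix_mulVec (continuous_fst.matrix_mulVec continuous_snd)
  refine ⟨fun M => v - B *ᵥ ((M * B)⁻¹ *ᵥ (M *ᵥ v)), continuousAt_const.sub ?_, by simp [hv], ?_⟩
  · exact hcont.continuousAt.comp (f := fun M => ((M * B)⁻¹, M *ᵥ v))
      (hinv.prodMk (continuous_id.matrix_mulVec continuous_const).continuousAt)
  · filter_upwards [hmul.matrix_det.continuousAt.eventually_ne hdet] with M hM
    rw [mulVec_sub, mulVec_mulVec, mulVec_mulVec, mul_nonsing_inv _ hM.isUnit, one_mulVec, sub_self]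

end KernelPerturbation

section Approximation

variable {d r : ℕ} {f P : ℂ[X]}

/-- The matrix, in monomial bases, of multiplication by the form `P` of degree `r` from forms of
degree `d - r` to forms of degree `d`, acting on row vectors. -/
def mulMatrix (d r : ℕ) (P : ℂ[X]) : Matrix (Fin (d - r + 1)) (Fin (d + 1)) ℂ :=
  Matrix.of fun i l => (P * Polynomial.X ^ (i : ℕ)).coeff l

lemma mem_apolar_iff_mulMatrix (h : Fin (d + 1) → ℂ) (hP : P.natDegree ≤ r) (hr : r ≤ d) :
    P ∈ apolar (paramFunctional h) d r ↔ (mulMatrix d r P).mulVec h = 0 := by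
  have happly (i : Fin (d - r + 1)) :
      paramFunctional h (P * Polynomial.X ^ (i : ℕ)) = (mulMatrix d r P).mulVec h i := by
    simp only [paramFunctional_apply, mulMatrix, Matrix.mulVec, dotProduct, Matrix.of_apply,
      mul_comm (h _)]
  rw [mem_apolar_iff_X_pow, and_iff_right hP, funext_iff]
  simp only [← happly]
  exact ⟨fun hf i => hf i (by omega), fun hf i hi => hf ⟨i, by omega⟩⟩

lemma vecMul_mulMatrix_apply (P : ℂ[X]) (c : Fin (d - r + 1) → ℂ) (l : Fin (d + 1)) :
    (mulMatrix d r P).vecMul c l = (P * coeffPoly (d - r) c).coeff l := by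
  rw [coeffPoly_apply, Finset.mul_sum, Polynomial.finsetSum_coeff, Matrix.vecMul, dotProduct]
  refine Finset.sum_congr rfl fun i _ => ?_
  rw [← Polynomial.C_mul_X_pow_eq_monomial, mul_left_comm, Polynomial.coeff_C_mul]
  rfl

lemma linearIndependent_row_mulMatrix (hP : P.natDegree ≤ r) (hP0 : P ≠ 0) (hr : r ≤ d) :
    LinearIndependent ℂ (mulMatrix d r P).row := by
  rw [← Matrix.vecMul_injective_iff]
  refine (injective_iff_map_eq_zero (mulMatrix d r P).vecMulLinear).2 fun c hc => ?_
  have hmul : P * coeffPoly (d - r) c ∈ Polynomial.degreeLT ℂ (d + 1) :=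
    mem_degreeLT_add_one.2 ((Polynomial.natDegree_mul_le_of_le hP
      (natDegree_coeffPoly_le c)).trans (by omega))
  have hzero : P * coeffPoly (d - r) c = 0 := by
    ext l
    by_cases hl : l < d + 1
    · rw [← vecMul_mulMatrix_apply P c ⟨l, hl⟩]
      exact congrFun hc ⟨l, hl⟩
    · exact Polynomial.coeff_eq_zero_of_degree_lt
        ((Polynomial.mem_degreeLT.1 hmul).trans_le (Nat.cast_le.2 (not_lt.1 hl)))
  exact coeffPoly_injective (((mul_eq_zero.1 hzero).resolve_left hP0).trans (map_zero _).symm)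

lemma mulVec_mulMatrix_surjective (hP : P.natDegree ≤ r) (hP0 : P ≠ 0) (hr : r ≤ d) :
    Function.Surjective (mulMatrix d r P).mulVec := by
  refine (LinearMap.range_eq_top (f := (mulMatrix d r P).mulVecLin)).1
    (Submodule.eq_top_of_finrank_eq ?_)
  rw [← Matrix.rank, (linearIndependent_row_mulMatrix hP hP0 hr).rank_matrix, Fintype.card_fin,
    Module.finrank_fin_fun]

lemma continuous_mulMatrix_add_smul (f b : ℂ[X]) :
    Continuous fun t : ℂ => mulMatrix d r (f + t • b) := by
  refine continuous_matrix fun i l => ?_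
  simp only [mulMatrix, Matrix.of_apply, add_mul, smul_mul_assoc, Polynomial.coeff_add,
    Polynomial.coeff_smul, smul_eq_mul]
  fun_prop

/-- Move `f` in a pencil whose general member is squarefree, and let the functional follow. -/
lemma mem_closure_setOf_squarefree_apolar {h : Fin (d + 1) → ℂ}
    (hf : f ∈ apolar (paramFunctional h) d r) (hf0 : f ≠ 0) (hr : 0 < r) (hrd : r ≤ d) :
    h ∈ closure {h' : Fin (d + 1) → ℂ |
      ∃ P ∈ apolar (paramFunctional h') d r, Squarefree P ∧ P.natDegree = r} := by
  obtain ⟨b, -, hfb⟩ := (isCoprimeForms_one hf.1).exists_mul_left hf0 r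
  rw [zero_add, one_mul] at hfb
  obtain ⟨η, hη, hη0, hker⟩ := exists_continuousAt_mulVec_eq_zero
    (mulVec_mulMatrix_surjective hf.1 hf0 hrd) ((mem_apolar_iff_mulMatrix h hf.1 hrd).1 hf)
  have hA : Filter.Tendsto (fun t : ℂ => mulMatrix d r (f + t • b)) (𝓝[≠] 0)
      (𝓝 (mulMatrix d r f)) := by
    have hlim := (continuous_mulMatrix_add_smul (d := d) (r := r) f b).tendsto 0
    rw [zero_smul, add_zero] at hlim
    exact hlim.mono_left nhdsWithin_le_nhds
  have hgood : ∀ᶠ t in 𝓝[≠] (0 : ℂ), Squarefree (f + t • b) ∧ (f + t • b).natDegree = r := by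
    filter_upwards [nhdsNE_le_cofinite 0
      (hfb.symm.finite_setOf_not_squarefree_natDegree hr).compl_mem_cofinite] with t ht
    exact not_not.1 ht
  refine mem_closure_of_tendsto (hη0 ▸ hη.tendsto.comp hA) ?_
  filter_upwards [hgood, hA.eventually hker] with t ht hkert
  exact ⟨f + t • b, (mem_apolar_iff_mulMatrix _ ht.2.le hrd).2 hkert, ht⟩

end Approximation

section VanishingForms

variable {K : Type*} [Field K] {k R : ℕ}

lemma isSquarefreeForm_nodal_id {s : Finset K} (hs : s.card ≤ k) (hk : k ≤ s.card + 1) :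
    IsSquarefreeForm k (Lagrange.nodal s (id : K → K)) where
  natDegree_le := Lagrange.natDegree_nodal.trans_le hs
  squarefree := squarefree_nodal_id
  le_natDegree_add_one := by rwa [Lagrange.natDegree_nodal]

lemma eval_homogenize_nodal_id_eq_zero {s : Finset K} (hs : s.card ≤ k) {x : Fin 2 → K}
    (hx : x 1 ≠ 0) (hxs : x 0 / x 1 ∈ s) :
    eval x ((Lagrange.nodal s id).homogenize k) = 0 := by
  have hroot := Lagrange.eval_nodal_at_node (v := (id : K → K)) hxs
  rw [Polynomial.eval_homogenize (Lagrange.natDegree_nodal.trans_le hs) x hx]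
  rw [id] at hroot
  rw [hroot, zero_mul]

lemma eval_homogenize_add_one_eq_zero {q : K[X]} (hq : q.natDegree ≤ k) {x : Fin 2 → K}
    (hx : x 1 = 0) : eval x (q.homogenize (k + 1)) = 0 := by
  rw [← mul_one q, Polynomial.homogenize_mul q 1 hq (by simp)]
  simp [hx]

lemma exists_isSquarefreeForm_eval_eq_zero (x : Fin R → Fin 2 → K) :
    ∃ c ≤ R, ∃ q : K[X], IsSquarefreeForm c q ∧ ∀ k, eval (x k) (q.homogenize c) = 0 := by
  classical
  set F : Finset (Fin R) := {k | x k 1 ≠ 0}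
  set s : Finset K := F.image fun k => x k 0 / x k 1
  have hsF : s.card ≤ F.card := Finset.card_image_le
  have hFR : F.card ≤ R := F.card_le_univ.trans_eq (Fintype.card_fin R)
  have hs {k : Fin R} (hk : x k 1 ≠ 0) : x k 0 / x k 1 ∈ s :=
    Finset.mem_image_of_mem _ (Finset.mem_filter.2 ⟨Finset.mem_univ k, hk⟩)
  by_cases hall : ∀ k, x k 1 ≠ 0
  · exact ⟨s.card, hsF.trans hFR, _, isSquarefreeForm_nodal_id le_rfl (by omega),
      fun k => eval_homogenize_nodal_id_eq_zero le_rfl (hall k) (hs (hall k))⟩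
  · obtain ⟨k₀, hk₀⟩ := not_forall.1 hall
    have hlt : F.card < R := by
      simpa using Finset.card_lt_univ_of_notMem (s := F) (x := k₀) (by simp [F, not_not.1 hk₀])
    refine ⟨s.card + 1, by omega, _, isSquarefreeForm_nodal_id (by omega) le_rfl, fun k => ?_⟩
    by_cases hk : x k 1 = 0
    · exact eval_homogenize_add_one_eq_zero Lagrange.natDegree_nodal.le hk
    · exact eval_homogenize_nodal_id_eq_zero (by omega) hk (hs hk)

end VanishingForms

section HankelTensors

variable {m n c k R : ℕ} {q P : ℂ[X]} {T : Tensor m n} {h : Fin ((n - 1) * m + 1) → ℂ}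

lemma sum_index_le (i : Fin m → Fin n) : ∑ j, (i j : ℕ) ≤ (n - 1) * m := by
  calc ∑ j, (i j : ℕ) ≤ ∑ _j : Fin m, (n - 1) :=
        Finset.sum_le_sum fun j _ => Nat.le_pred_of_lt (i j).isLt
    _ = (n - 1) * m := by simp [mul_comm]

lemma exists_sum_index_eq (hn : 0 < n) {e : ℕ} (he : e ≤ (n - 1) * m) :
    ∃ i : Fin m → Fin n, ∑ j, (i j : ℕ) = e := by
  induction m generalizing e with
  | zero => exact ⟨Fin.elim0, by simpa [eq_comm] using he⟩
  | succ m ih =>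
    rw [Nat.mul_succ] at he
    obtain ⟨i, hi⟩ := ih (e := e - min (n - 1) e) (by omega)
    refine ⟨Fin.cons ⟨min (n - 1) e, by omega⟩ i, ?_⟩
    rw [Fin.sum_univ_succ]
    simp only [Fin.cons_zero, Fin.cons_succ, hi]
    omega

/-- The Hankel tensor with parameter vector `h`, as a function of `h`. -/
def hankelTensor (m n : ℕ) (h : Fin ((n - 1) * m + 1) → ℂ) : Tensor m n :=
  fun i => h ⟨∑ j, (i j : ℕ), Nat.lt_succ_of_le (sum_index_le i)⟩

lemma isHankel_hankelTensor (h : Fin ((n - 1) * m + 1) → ℂ) : IsHankel (hankelTensor m n h) h :=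
  fun _ => rfl

namespace IsHankel

lemma eq_hankelTensor (hT : IsHankel T h) : T = hankelTensor m n h := funext hT

lemma apply_eq_paramFunctional (hT : IsHankel T h) (i : Fin m → Fin n) :
    T i = paramFunctional h (Polynomial.X ^ ∑ j, (i j : ℕ)) :=
  (hT i).trans (paramFunctional_X_pow h _).symm

end IsHankel

lemma prod_vand (a b : ℂ) (i : Fin m → Fin n) :
    ∏ j, vand n a b (i j) = a ^ ((n - 1) * m - ∑ j, (i j : ℕ)) * b ^ (∑ j, (i j : ℕ)) := by
  have hle (j : Fin m) : (i j : ℕ) ≤ n - 1 := Nat.le_pred_of_lt (i j).isLt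
  simp only [vand]
  rw [Finset.prod_mul_distrib, Finset.prod_pow_eq_pow_sum, Finset.prod_pow_eq_pow_sum,
    Finset.sum_tsub_distrib _ fun j _ => hle j]
  simp [mul_comm]

lemma IsHankel.mem_vandSet_iff (hn : 0 < n) (hT : IsHankel T h) :
    T ∈ vandSet m n R ↔ ∃ ab : Fin R → ℂ × ℂ, ∀ e ≤ (n - 1) * m,
      paramFunctional h (Polynomial.X ^ e) =
        ∑ k, (ab k).1 ^ ((n - 1) * m - e) * (ab k).2 ^ e := by
  refine exists_congr fun ab => ⟨fun hab e he => ?_, fun hab i => ?_⟩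
  · obtain ⟨i, rfl⟩ := exists_sum_index_eq hn he
    simp only [← hT.apply_eq_paramFunctional, hab i, prod_vand]
  · simp only [hT.apply_eq_paramFunctional, hab _ (sum_index_le i), prod_vand]

lemma IsHankel.mem_vandSet_of_squarefree_mem_apolar (hn : 0 < n) (hT : IsHankel T h)
    (hd : 0 < (n - 1) * m) (hP : P ∈ apolar (paramFunctional h) ((n - 1) * m) k)
    (hsq : Squarefree P) (hPk : P.natDegree = k) : T ∈ vandSet m n k := by
  obtain ⟨w, z, hwz⟩ := exists_eq_sum_eval_of_mem_apolar hP hsq hPk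
  choose u hu using fun i => IsAlgClosed.exists_pow_nat_eq (w i) hd
  refine (hT.mem_vandSet_iff hn).2 ⟨fun i => (u i, u i * z i), fun e he => ?_⟩
  rw [hwz (Polynomial.X ^ e) (by simpa using he)]
  refine Finset.sum_congr rfl fun i _ => ?_
  rw [Polynomial.eval_pow, Polynomial.eval_X, ← hu i, mul_pow, ← mul_assoc, ← pow_add,
    Nat.sub_add_cancel he]

lemma paramFunctional_eq_sum_eval_homogenize {d : ℕ} {h : Fin (d + 1) → ℂ}
    {ab : Fin R → ℂ × ℂ}
    (hab : ∀ e ≤ d, paramFunctional h (Polynomial.X ^ e) =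
      ∑ k, (ab k).1 ^ (d - e) * (ab k).2 ^ e) {p : ℂ[X]} (hp : p.natDegree ≤ d) :
    paramFunctional h p = ∑ k, eval ![(ab k).2, (ab k).1] (p.homogenize d) := by
  rw [p.as_sum_range_C_mul_X_pow, Polynomial.homogenize_finsetSum, map_sum]
  simp only [map_sum]
  rw [Finset.sum_comm]
  refine Finset.sum_congr rfl fun e he => ?_
  have hed : e ≤ d := by rw [Finset.mem_range] at he; omega
  rw [← Polynomial.smul_eq_C_mul, map_smul, hab e hed, Polynomial.smul_eq_C_mul,
    Polynomial.homogenize_C_mul, Polynomial.homogenize_X_pow hed, smul_eq_mul, Finset.mul_sum]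
  simp [mul_comm]

lemma mem_apolar_of_eval_homogenize_eq_zero {d : ℕ} {h : Fin (d + 1) → ℂ}
    {ab : Fin R → ℂ × ℂ}
    (hab : ∀ e ≤ d, paramFunctional h (Polynomial.X ^ e) =
      ∑ k, (ab k).1 ^ (d - e) * (ab k).2 ^ e) (hq : q.natDegree ≤ c)
    (hzero : ∀ k, eval ![(ab k).2, (ab k).1] (q.homogenize c) = 0) :
    q ∈ apolar (paramFunctional h) d c := by
  refine ⟨hq, fun p hp => ?_⟩
  obtain ⟨l, rfl⟩ := Nat.exists_eq_add_of_le (show c ≤ d by omega)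
  have hpl : p.natDegree ≤ l := by omega
  rw [paramFunctional_eq_sum_eval_homogenize hab (Polynomial.natDegree_mul_le_of_le hq hpl),
    Polynomial.homogenize_mul q p hq hpl]
  exact Finset.sum_eq_zero fun k _ => by rw [map_mul, hzero k, zero_mul]

lemma IsHankel.exists_isSquarefreeForm_mem_apolar (hn : 0 < n) (hT : IsHankel T h)
    (hR : T ∈ vandSet m n R) :
    ∃ c ≤ R, ∃ q ∈ apolar (paramFunctional h) ((n - 1) * m) c, IsSquarefreeForm c q := by
  obtain ⟨ab, hab⟩ := (hT.mem_vandSet_iff hn).1 hR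
  obtain ⟨c, hc, q, hq, hzero⟩ :=
    exists_isSquarefreeForm_eval_eq_zero fun k => ![(ab k).2, (ab k).1]
  exact ⟨c, hc, q, mem_apolar_of_eval_homogenize_eq_zero hab hq.natDegree_le hzero, hq⟩

lemma continuous_hankelTensor : Continuous (hankelTensor m n) :=
  continuous_pi fun _ => continuous_apply _

lemma IsHankel.mem_closure_vandSet (hn : 0 < n) (hT : IsHankel T h)
    (hd : k ≤ (n - 1) * m) (hk : 0 < k)
    (hq : q ∈ apolar (paramFunctional h) ((n - 1) * m) k) (hq0 : q ≠ 0) :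
    T ∈ closure (vandSet m n k) := by
  rw [hT.eq_hankelTensor]
  refine map_mem_closure continuous_hankelTensor
    (mem_closure_setOf_squarefree_apolar hq hq0 hk hd) ?_
  rintro h' ⟨P, hP, hsq, hPk⟩
  exact (isHankel_hankelTensor h').mem_vandSet_of_squarefree_mem_apolar hn (hk.trans_le hd)
    hP hsq hPk

end HankelTensors

section TensorRank

variable {m n p q R : ℕ} {T : Tensor m n} {h : Fin ((n - 1) * m + 1) → ℂ}

lemma vandSet_subset_symSet : vandSet m n R ⊆ symSet m n R :=
  fun _ ⟨ab, hab⟩ => ⟨fun k => vand n (ab k).1 (ab k).2, hab⟩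

lemma symSet_subset_cpSet : symSet m n R ⊆ cpSet m n R :=
  fun _ ⟨v, hv⟩ => ⟨fun k _ => v k, hv⟩

lemma eventually_rank_le_rank {𝕜 ι κ : Type*} [NontriviallyNormedField 𝕜] [CompleteSpace 𝕜]
    [Finite ι] [Fintype κ] (M : Matrix ι κ 𝕜) : ∀ᶠ N in 𝓝 M, M.rank ≤ N.rank := by
  have := Fintype.ofFinite ι
  obtain ⟨α, a, ha, hspan, hli⟩ := exists_linearIndependent' 𝕜 M.col
  have := Finite.of_injective a ha
  have := Fintype.ofFinite α
  have hcont : Continuous fun N : Matrix ι κ 𝕜 => N.col ∘ a :=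
    continuous_pi fun i => continuous_pi fun j => continuous_id.matrix_elem j (a i)
  filter_upwards [(isOpen_setOfPred_linearIndependent.preimage hcont).mem_nhds hli] with N hN
  rw [Matrix.rank_eq_finrank_span_cols, Matrix.rank_eq_finrank_span_cols, ← hspan,
    finrank_span_eq_card hli, ← finrank_span_eq_card (Set.mem_ofPred.1 hN)]
  exact Submodule.finrank_mono (Submodule.span_mono (Set.range_comp_subset_range _ _))

lemma rank_flattening_le {S : Tensor (p + q) n} {ι κ : Type*} [Fintype ι]
    (hS : S ∈ cpSet (p + q) n R) (i : ι → Fin p → Fin n) (j : κ → Fin q → Fin n) :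
    (Matrix.of fun b a => S (Fin.append (i a) (j b))).rank ≤ R := by
  obtain ⟨u, hu⟩ := hS
  have hfactor : (Matrix.of fun b a => S (Fin.append (i a) (j b))) =
      (Matrix.of fun b k => ∏ l, u k (Fin.natAdd p l) (j b l)) *
        (Matrix.of fun k a => ∏ l, u k (Fin.castAdd q l) (i a l) : Matrix (Fin R) ι ℂ) := by
    ext b a
    simp [Matrix.mul_apply, hu, Fin.prod_univ_add, mul_comm]
  rw [hfactor]
  exact (Matrix.rank_mul_le_left _ _).trans
    ((Matrix.rank_le_card_width _).trans_eq (Fintype.card_fin R))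

lemma IsHankel.rank_hMat_le_of_mem_closure_cpSet (hn : 0 < n) (hT : IsHankel T h) (hp : p ≤ m)
    (hR : T ∈ closure (cpSet m n R)) : (hMat ((n - 1) * m) ((n - 1) * p) h).rank ≤ R := by
  obtain ⟨q, rfl⟩ := Nat.exists_eq_add_of_le hp
  have hpd : (n - 1) * p ≤ (n - 1) * (p + q) := Nat.mul_le_mul_left _ hp
  have hqd : (n - 1) * (p + q) - (n - 1) * p = (n - 1) * q := by rw [mul_add]; omega
  choose i hi using fun a : Fin ((n - 1) * p + 1) =>
    exists_sum_index_eq (m := p) hn (Nat.lt_succ_iff.1 a.isLt)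
  choose j hj using fun b : Fin ((n - 1) * (p + q) - (n - 1) * p + 1) =>
    exists_sum_index_eq (m := q) hn ((Nat.lt_succ_iff.1 b.isLt).trans_eq hqd)
  let flattening (S : Tensor (p + q) n) := Matrix.of fun b a => S (Fin.append (i a) (j b))
  have hcont : Continuous flattening := continuous_matrix fun b a => continuous_apply _
  have hflat : hMat ((n - 1) * (p + q)) ((n - 1) * p) h = flattening T := by
    ext b a
    rw [hMat_apply h b a hpd]
    simp [flattening, hT _, Fin.sum_univ_add, hi, hj, add_comm]
  obtain ⟨S, hS, hle⟩ := ((mem_closure_iff_frequently.1 hR).and_eventually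
    (hcont.continuousAt.eventually (eventually_rank_le_rank (flattening T)))).exists
  exact hflat ▸ hle.trans (rank_flattening_le hS i j)

end TensorRank

section HankelRank

variable {m n r R : ℕ} {f : ℂ[X]} {T : Tensor m n} {h : Fin ((n - 1) * m + 1) → ℂ}

/-- A squarefree apolar form of degree at most `d - r + 1` would be a multiple of `f`. -/
lemma IsHankel.isLeast_vandSet (hn : 0 < n) (hT : IsHankel T h)
    (hf : IsMinimalApolar (paramFunctional h) ((n - 1) * m) r f) (hnsf : ¬ IsSquarefreeForm r f)
    (hr : 2 ≤ r) (hrd : 2 * r ≤ (n - 1) * m + 2) :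
    IsLeast {R | T ∈ vandSet m n R} ((n - 1) * m - r + 2) := by
  refine ⟨?_, fun R hR => ?_⟩
  · obtain ⟨P, hP, hsq, hPdeg⟩ := hf.exists_squarefree_mem_apolar hr hrd
    exact hT.mem_vandSet_of_squarefree_mem_apolar hn (by omega) hP hsq hPdeg
  · obtain ⟨c, hcR, q, hq, hqsq⟩ := hT.exists_isSquarefreeForm_mem_apolar hn hR
    by_contra hlt
    rw [hf.apolar_eq_formMultiples (by omega)] at hq
    exact hnsf (hqsq.of_mem_formMultiples hf.mem.1 hq)

lemma IsHankel.le_of_mem_closure_cpSet (hn : 0 < n) (hT : IsHankel T h)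
    (hf : IsMinimalApolar (paramFunctional h) ((n - 1) * m) r f)
    (hr : r ≤ 1 + (n - 1) * (m / 2)) (hR : T ∈ closure (cpSet m n R)) : r ≤ R := by
  have hm : (n - 1) * (m / 2) ≤ (n - 1) * m / 2 := Nat.mul_div_le_mul_div_assoc _ _ _
  exact (hf.le_rank_hMat (by omega) (by omega) (by omega)).trans
    (hT.rank_hMat_le_of_mem_closure_cpSet hn (Nat.div_le_self m 2) hR)

end HankelRank

theorem stmt_12_general (n m : ℕ) (H : Tensor m n) (h : Fin ((n - 1) * m + 1) → ℂ)
    (hH : IsHankel H h) (r : ℕ) (hr : r = (hMat ((n - 1) * m) ((n - 1) * m / 2) h).rank)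
    (hrs : r ≤ 1 + (n - 1) * (m / 2))
    {f : Fin (r + 1) → ℂ} (hf0 : f ≠ 0) (hf : (hMat ((n - 1) * m) r h).mulVec f = 0)
    (hnsf : ¬ Squarefree (binForm r f)) :
    vandRank H = (n - 1) * m - r + 2 ∧ bVandRank H = r ∧ bSymRank H = r ∧ brank H = r ∧
      r ≤ symRank H ∧ symRank H ≤ (n - 1) * m - r + 2 := by
  have hP0 : coeffPoly r f ≠ 0 := fun h0 => hf0 (coeffPoly_injective (h0.trans (map_zero _).symm))
  have hP_nsf : ¬ IsSquarefreeForm r (coeffPoly r f) := mt squarefree_binForm hnsf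
  have hr2 : 2 ≤ r := not_lt.1 fun hlt =>
    hP_nsf (isSquarefreeForm_of_le_one hP0 (natDegree_coeffPoly_le f) (by omega))
  have hm : (n - 1) * (m / 2) ≤ (n - 1) * m / 2 := Nat.mul_div_le_mul_div_assoc _ _ _
  have hn : 0 < n := Nat.pos_of_ne_zero (by rintro rfl; omega)
  have hP : IsMinimalApolar (paramFunctional h) ((n - 1) * m) r (coeffPoly r f) :=
    ⟨(coeffPoly_mem_apolar_iff h (by omega) f).2 hf, hP0,
      fun j hj => apolar_eq_bot_of_lt_rank (Nat.div_le_self _ 2) (hr ▸ hj)⟩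
  have hV := hH.isLeast_vandSet hn hP hP_nsf hr2 (by omega)
  have hVr := hH.mem_closure_vandSet hn (by omega) (by omega) hP.mem hP0
  have hSr := closure_mono vandSet_subset_symSet hVr
  have hCr := closure_mono symSet_subset_cpSet hSr
  have hle {R : ℕ} (hR : H ∈ closure (cpSet m n R)) : r ≤ R :=
    hH.le_of_mem_closure_cpSet hn hP hrs hR
  have hle_sym {R : ℕ} (hR : H ∈ closure (symSet m n R)) : r ≤ R :=
    hle (closure_mono symSet_subset_cpSet hR)
  have hS := vandSet_subset_symSet hV.1
  exact ⟨hV.csInf_eq,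
    IsLeast.csInf_eq ⟨hVr, fun _ hR => hle_sym (closure_mono vandSet_subset_symSet hR)⟩,
    IsLeast.csInf_eq ⟨hSr, fun _ hR => hle_sym hR⟩, IsLeast.csInf_eq ⟨hCr, fun _ hR => hle hR⟩,
    le_csInf ⟨_, hS⟩ fun _ hR => hle_sym (subset_closure hR), Nat.sInf_le hS⟩

/-- Odd order `m = 2m₀+1`: if `r ≤ 1+(n-1)m₀` and every nonzero kernel
vector has a non-squarefree binary form, then `rank_V(H) = d-r+2`, the border ranks
equal `r`, and `r ≤ rank_S(H) ≤ d-r+2`. -/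
theorem stmt_12 (n m₀ : ℕ) (hn : 2 ≤ n) (hm : 1 ≤ m₀)
    (H : Tensor (2 * m₀ + 1) n) (h : Fin ((n - 1) * (2 * m₀ + 1) + 1) → ℂ)
    (hH : IsHankel H h)
    (r : ℕ)
    (hr : r = (hMat ((n - 1) * (2 * m₀ + 1)) ((n - 1) * (2 * m₀ + 1) / 2) h).rank)
    (hrs : r ≤ 1 + (n - 1) * m₀)
    (hker : ∃ f : Fin (r + 1) → ℂ, f ≠ 0 ∧
      (hMat ((n - 1) * (2 * m₀ + 1)) r h).mulVec f = 0)
    (hnsf : ∀ f : Fin (r + 1) → ℂ, f ≠ 0 →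
      (hMat ((n - 1) * (2 * m₀ + 1)) r h).mulVec f = 0 → ¬ Squarefree (binForm r f)) :
    vandRank H = (n - 1) * (2 * m₀ + 1) - r + 2 ∧
      bVandRank H = r ∧ bSymRank H = r ∧ brank H = r ∧
      r ≤ symRank H ∧ symRank H ≤ (n - 1) * (2 * m₀ + 1) - r + 2 := by
  have hm₀ : (2 * m₀ + 1) / 2 = m₀ := by omega
  obtain ⟨f, hf0, hf⟩ := hker
  exact stmt_12_general n (2 * m₀ + 1) H h hH r hr (hm₀.symm ▸ hrs) hf0 hf (hnsf f hf0 hf)
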